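/- arXiv:1707.00970 — 2 statements merged into one kernel-verified Lean document; each statement's English description precedes it below -/
import Mathlib

section
/- Let (a,B_a) be a NIS-Lie superalgebra over a field K of characteristic 2 with B_a even, and let (g,B_g) and (g̃,B_{g̃}) be D_od-extensions of (a,B_a) by the pairs (D,a_0) and (D̃,ã_0) respectively, with g = Kx ⊕ a ⊕ Kx* and g̃ = Kx̃ ⊕ a ⊕ Kx̃* (x, x*, x̃, x̃* odd). Suppose π_0 is an isometry of (a,B_a), λ ∈ K is nonzero, and t ∈ a_1 satisfy π_0^{-1}∘D̃∘π_0 = λD + ad_t on a and ã_0 = λ²π_0(a_0) + s_a(π_0(t)) + λπ_0(D(t)). Then for any ν ∈ K, the map π : g → g̃ defined by π(u) = π_0(u) + B_a(t,u)x̃ for u ∈ a_1, π(u) = π_0(u) for u ∈ a_0, π(x) = λx̃, and π(x*) = λ^{-1}(x̃* + π_0(t)) + νx̃, is an adapted isometry. -/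
/-!
Common definitions: Lie superalgebras in characteristic 2 (encoded by their even
part `g0`, odd part `g1`, bracket components and squaring), NIS forms (even and odd),
homogeneous derivations, isometries, ideals, irreducibility, and the structure
formulas of the various double extensions.
-/

namespace Char2DoubleExt

section Defs

variable (K : Type) [Field K]
variable (g0 g1 h0 h1 : Type)
variable [AddCommGroup g0] [Module K g0] [AddCommGroup g1] [Module K g1]
variable [AddCommGroup h0] [Module K h0] [AddCommGroup h1] [Module K h1]

/-- A Lie superalgebra over a field of characteristic 2: `g0` is the even part,
`g1` the odd part, `br0` the bracket on `g0`, `br1` the action of `g0` on `g1`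
(the mixed bracket, extended symmetrically), `br11` the bracket of two odd
elements, and `sq` the squaring, whose polarization is `br11`. -/
structure SuperAlg : Type where
  br0 : g0 →ₗ[K] g0 →ₗ[K] g0
  br1 : g0 →ₗ[K] g1 →ₗ[K] g1
  br11 : g1 →ₗ[K] g1 →ₗ[K] g0
  sq : g1 → g0
  sq_smul : ∀ (c : K) (f : g1), sq (c • f) = (c * c) • sq f
  sq_add : ∀ f g : g1, sq (f + g) = sq f + sq g + br11 f g
  br0_self : ∀ x : g0, br0 x x = 0
  br11_comm : ∀ f g : g1, br11 f g = br11 g f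
  jacobi0 : ∀ x y z : g0, br0 x (br0 y z) + br0 y (br0 z x) + br0 z (br0 x y) = 0
  act_br : ∀ (x y : g0) (f : g1), br1 (br0 x y) f = br1 x (br1 y f) + br1 y (br1 x f)
  jacobi_mix : ∀ (x : g0) (f g : g1),
    br0 x (br11 f g) + br11 f (br1 x g) + br11 g (br1 x f) = 0
  sq_br0 : ∀ (f : g1) (x : g0), br0 (sq f) x = br11 f (br1 x f)
  sq_br1 : ∀ f g : g1, br1 (sq f) g = br1 (br11 f g) f

/-- A non-degenerate invariant supersymmetric *even* bilinear form on a Lie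
superalgebra in characteristic 2: it pairs `g0` with `g0` (component `B0`) and
`g1` with `g1` (component `B1`); mixed pairings vanish by evenness. -/
structure EvenNIS (S : SuperAlg K g0 g1) : Type where
  B0 : g0 →ₗ[K] g0 →ₗ[K] K
  B1 : g1 →ₗ[K] g1 →ₗ[K] K
  symm0 : ∀ x y, B0 x y = B0 y x
  symm1 : ∀ f g, B1 f g = B1 g f
  alt1 : ∀ f, B1 f f = 0
  nondeg0 : ∀ x, (∀ y, B0 x y = 0) → x = 0
  nondeg1 : ∀ f, (∀ g, B1 f g = 0) → f = 0
  inv0 : ∀ x y z, B0 (S.br0 x y) z = B0 x (S.br0 y z)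
  inv1 : ∀ (x : g0) (f g : g1), B1 (S.br1 x f) g = B0 x (S.br11 f g)
  inv2 : ∀ (f g : g1) (x : g0), B0 (S.br11 f g) x = B1 f (S.br1 x g)

/-- A non-degenerate invariant supersymmetric *odd* bilinear form: it pairs `g0`
with `g1` (component `Bo`); like-parity pairings vanish by oddness, and
`B(f,f) = 0` for odd `f` is automatic. -/
structure OddNIS (S : SuperAlg K g0 g1) : Type where
  Bo : g0 →ₗ[K] g1 →ₗ[K] K
  nondeg0 : ∀ x, (∀ f, Bo x f = 0) → x = 0
  nondeg1 : ∀ f, (∀ x, Bo x f = 0) → f = 0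
  inv0 : ∀ (x y : g0) (f : g1), Bo (S.br0 x y) f = Bo x (S.br1 y f)
  inv1 : ∀ (x y : g0) (f : g1), Bo y (S.br1 x f) = Bo x (S.br1 y f)
  inv2 : ∀ f g h : g1, Bo (S.br11 f g) h = Bo (S.br11 g h) f

/-- An even derivation of a Lie superalgebra in characteristic 2. -/
structure EvenDer (S : SuperAlg K g0 g1) : Type where
  D0 : g0 →ₗ[K] g0
  D1 : g1 →ₗ[K] g1
  der0 : ∀ x y, D0 (S.br0 x y) = S.br0 (D0 x) y + S.br0 x (D0 y)
  der1 : ∀ x f, D1 (S.br1 x f) = S.br1 (D0 x) f + S.br1 x (D1 f)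
  der_sq : ∀ f, D0 (S.sq f) = S.br11 (D1 f) f

/-- An odd derivation of a Lie superalgebra in characteristic 2. -/
structure OddDer (S : SuperAlg K g0 g1) : Type where
  D0 : g0 →ₗ[K] g1
  D1 : g1 →ₗ[K] g0
  der0 : ∀ x y, D0 (S.br0 x y) = S.br1 x (D0 y) + S.br1 y (D0 x)
  der1 : ∀ x f, D1 (S.br1 x f) = S.br11 (D0 x) f + S.br0 x (D1 f)
  der_sq : ∀ f, D0 (S.sq f) = S.br1 (D1 f) f

/-- An isometry between Lie superalgebras endowed with even NIS forms: an even
linear bijection preserving brackets, squarings and the bilinear forms. -/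
structure EvenIsometry (S : SuperAlg K g0 g1) (N : EvenNIS K g0 g1 S)
    (S' : SuperAlg K h0 h1) (N' : EvenNIS K h0 h1 S') : Type where
  e0 : g0 ≃ₗ[K] h0
  e1 : g1 ≃ₗ[K] h1
  map_br0 : ∀ x y, e0 (S.br0 x y) = S'.br0 (e0 x) (e0 y)
  map_br1 : ∀ x f, e1 (S.br1 x f) = S'.br1 (e0 x) (e1 f)
  map_br11 : ∀ f g, e0 (S.br11 f g) = S'.br11 (e1 f) (e1 g)
  map_sq : ∀ f, e0 (S.sq f) = S'.sq (e1 f)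
  map_B0 : ∀ x y, N'.B0 (e0 x) (e0 y) = N.B0 x y
  map_B1 : ∀ f g, N'.B1 (e1 f) (e1 g) = N.B1 f g

/-- An isometry between Lie superalgebras endowed with odd NIS forms. -/
structure OddIsometry (S : SuperAlg K g0 g1) (N : OddNIS K g0 g1 S)
    (S' : SuperAlg K h0 h1) (N' : OddNIS K h0 h1 S') : Type where
  e0 : g0 ≃ₗ[K] h0
  e1 : g1 ≃ₗ[K] h1
  map_br0 : ∀ x y, e0 (S.br0 x y) = S'.br0 (e0 x) (e0 y)
  map_br1 : ∀ x f, e1 (S.br1 x f) = S'.br1 (e0 x) (e1 f)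
  map_br11 : ∀ f g, e0 (S.br11 f g) = S'.br11 (e1 f) (e1 g)
  map_sq : ∀ f, e0 (S.sq f) = S'.sq (e1 f)
  map_Bo : ∀ x f, N'.Bo (e0 x) (e1 f) = N.Bo x f

/-- A (graded) ideal of a Lie superalgebra in characteristic 2, given by its
even part `I0` and odd part `I1`. -/
def IsIdealPair (S : SuperAlg K g0 g1) (I0 : Submodule K g0) (I1 : Submodule K g1) : Prop :=
  (∀ x ∈ I0, ∀ y, S.br0 x y ∈ I0) ∧ (∀ x ∈ I0, ∀ f, S.br1 x f ∈ I1) ∧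
  (∀ f ∈ I1, ∀ x : g0, S.br1 x f ∈ I1) ∧ (∀ f ∈ I1, ∀ g, S.br11 f g ∈ I0) ∧
  (∀ f ∈ I1, S.sq f ∈ I0)

/-- Irreducibility of a NIS-Lie superalgebra with an even form: it is not the
direct sum of two nonzero mutually orthogonal ideals. -/
def EvenIrreducible (S : SuperAlg K g0 g1) (N : EvenNIS K g0 g1 S) : Prop :=
  ¬ ∃ (I0 J0 : Submodule K g0) (I1 J1 : Submodule K g1),
      IsIdealPair K g0 g1 S I0 I1 ∧ IsIdealPair K g0 g1 S J0 J1 ∧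
      (I0 ≠ ⊥ ∨ I1 ≠ ⊥) ∧ (J0 ≠ ⊥ ∨ J1 ≠ ⊥) ∧
      I0 ⊓ J0 = ⊥ ∧ I0 ⊔ J0 = ⊤ ∧ I1 ⊓ J1 = ⊥ ∧ I1 ⊔ J1 = ⊤ ∧
      (∀ x ∈ I0, ∀ y ∈ J0, N.B0 x y = 0) ∧ (∀ f ∈ I1, ∀ g ∈ J1, N.B1 f g = 0)

/-- Irreducibility of a NIS-Lie superalgebra with an odd form. -/
def OddIrreducible (S : SuperAlg K g0 g1) (N : OddNIS K g0 g1 S) : Prop :=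
  ¬ ∃ (I0 J0 : Submodule K g0) (I1 J1 : Submodule K g1),
      IsIdealPair K g0 g1 S I0 I1 ∧ IsIdealPair K g0 g1 S J0 J1 ∧
      (I0 ≠ ⊥ ∨ I1 ≠ ⊥) ∧ (J0 ≠ ⊥ ∨ J1 ≠ ⊥) ∧
      I0 ⊓ J0 = ⊥ ∧ I0 ⊔ J0 = ⊤ ∧ I1 ⊓ J1 = ⊥ ∧ I1 ⊔ J1 = ⊤ ∧
      (∀ x ∈ I0, ∀ g ∈ J1, N.Bo x g = 0) ∧ (∀ y ∈ J0, ∀ f ∈ I1, N.Bo y f = 0)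

/-- An ideal of a Lie superalgebra given as a pair of subsets (closed under the
vector space operations, brackets with arbitrary elements, and the squaring). -/
def IsIdealSet (S : SuperAlg K g0 g1) (I0 : Set g0) (I1 : Set g1) : Prop :=
  ((0 : g0) ∈ I0) ∧ (∀ x y, x ∈ I0 → y ∈ I0 → x + y ∈ I0) ∧
  (∀ (c : K) x, x ∈ I0 → c • x ∈ I0) ∧
  ((0 : g1) ∈ I1) ∧ (∀ f g, f ∈ I1 → g ∈ I1 → f + g ∈ I1) ∧
  (∀ (c : K) f, f ∈ I1 → c • f ∈ I1) ∧
  (∀ x ∈ I0, ∀ y, S.br0 x y ∈ I0) ∧ (∀ x ∈ I0, ∀ f, S.br1 x f ∈ I1) ∧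
  (∀ f ∈ I1, ∀ x : g0, S.br1 x f ∈ I1) ∧ (∀ f ∈ I1, ∀ g, S.br11 f g ∈ I0) ∧
  (∀ f ∈ I1, S.sq f ∈ I0)

/-- The even part of the center of a Lie superalgebra. -/
def zEven (S : SuperAlg K g0 g1) : Submodule K g0 :=
  (⨅ y : g0, LinearMap.ker (S.br0.flip y)) ⊓ (⨅ f : g1, LinearMap.ker (S.br1.flip f))

/-- The odd part of the center of a Lie superalgebra. -/
def zOdd (S : SuperAlg K g0 g1) : Submodule K g1 :=
  (⨅ x : g0, LinearMap.ker (S.br1 x)) ⊓ (⨅ g : g1, LinearMap.ker (S.br11.flip g))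

/-- The compatibility conditions between an even NIS `N`, an even derivation `D`
and a quadratic form `al` on the odd part, entering the `D_ev`-extension (even
form case): `B(Du,v)+B(u,Dv)=0`, `B(Du,u)=0` for even `u`, `al` is quadratic and
its polar form is `B(·,D·)`. -/
def DevDataEven (S : SuperAlg K g0 g1) (N : EvenNIS K g0 g1 S)
    (D : EvenDer K g0 g1 S) (al : g1 → K) : Prop :=
  (∀ x y : g0, N.B0 (D.D0 x) y + N.B0 x (D.D0 y) = 0) ∧
  (∀ f g : g1, N.B1 (D.D1 f) g + N.B1 f (D.D1 g) = 0) ∧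
  (∀ x : g0, N.B0 (D.D0 x) x = 0) ∧
  (∀ (c : K) (f : g1), al (c • f) = c * c * al f) ∧
  (∀ f g : g1, N.B1 f (D.D1 g) = al (f + g) - al f - al g)

/-- The structure constants of the `D_ev`-extension `g = Kx ⊕ a ⊕ Kx*` (even
form, even `x`, `x*`); an element of the even part is written `(r, u, s)` for
`r x + u + s x*`, and the constant `c` is the (arbitrary) value `B_g(x*,x*)`. -/
def DevExtEvenFormulas (S : SuperAlg K g0 g1) (N : EvenNIS K g0 g1 S)
    (D : EvenDer K g0 g1 S) (al : g1 → K) (c : K)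
    (T : SuperAlg K (K × g0 × K) g1) (M : EvenNIS K (K × g0 × K) g1 T) : Prop :=
  (∀ (r s r' s' : K) (u u' : g0),
      T.br0 (r, u, s) (r', u', s')
        = (N.B0 (D.D0 u) u', S.br0 u u' + s • D.D0 u' + s' • D.D0 u, 0)) ∧
  (∀ (r s : K) (u : g0) (f : g1), T.br1 (r, u, s) f = S.br1 u f + s • D.D1 f) ∧
  (∀ f : g1, T.sq f = (al f, S.sq f, 0)) ∧
  (∀ (r s r' s' : K) (u u' : g0),
      M.B0 (r, u, s) (r', u', s') = N.B0 u u' + r * s' + r' * s + c * (s * s')) ∧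
  (∀ f g : g1, M.B1 f g = N.B1 f g)

/-- The compatibility conditions between an even NIS `N`, an odd derivation `D`
and an even element `w = a₀`, entering the `D_od`-extension (even form case):
`B(Du,v) = B(u,Dv)`, `D² = ad_w`, `D(w) = 0`. -/
def DodDataEven (S : SuperAlg K g0 g1) (N : EvenNIS K g0 g1 S)
    (D : OddDer K g0 g1 S) (w : g0) : Prop :=
  (∀ (x : g0) (f : g1), N.B1 (D.D0 x) f = N.B0 x (D.D1 f)) ∧
  (∀ x : g0, D.D1 (D.D0 x) = S.br0 w x) ∧
  (∀ f : g1, D.D0 (D.D1 f) = S.br1 w f) ∧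
  D.D0 w = 0

/-- The structure constants of the `D_od`-extension `g = Kx ⊕ a ⊕ Kx*` (even
form, odd `x`, `x*`); an element of the odd part is written `(r, u, t)` for
`r x + u + t x*`. -/
def DodExtEvenFormulas (S : SuperAlg K g0 g1) (N : EvenNIS K g0 g1 S)
    (D : OddDer K g0 g1 S) (w : g0)
    (T : SuperAlg K g0 (K × g1 × K)) (M : EvenNIS K g0 (K × g1 × K) T) : Prop :=
  (∀ x y : g0, T.br0 x y = S.br0 x y) ∧
  (∀ (x : g0) (r t : K) (u : g1),
      T.br1 x (r, u, t) = (N.B1 (D.D0 x) u, S.br1 x u + t • D.D0 x, 0)) ∧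
  (∀ (r t : K) (u : g1), T.sq (r, u, t) = S.sq u + (t * t) • w + t • D.D1 u) ∧
  (∀ x y : g0, M.B0 x y = N.B0 x y) ∧
  (∀ (r t r' t' : K) (u u' : g1),
      M.B1 (r, u, t) (r', u', t') = N.B1 u u' + r * t' + r' * t)

/-- The compatibility conditions between an odd NIS `No`, an odd derivation `D`,
an even element `w = a₀` and a quadratic form `al`, entering the
`D_od`-extension (odd form case). -/
def DodDataOdd (S : SuperAlg K g0 g1) (No : OddNIS K g0 g1 S)
    (D : OddDer K g0 g1 S) (w : g0) (al : g1 → K) : Prop :=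
  (∀ x y : g0, No.Bo y (D.D0 x) + No.Bo x (D.D0 y) = 0) ∧
  (∀ f g : g1, No.Bo (D.D1 f) g + No.Bo (D.D1 g) f = 0) ∧
  (∀ x : g0, No.Bo x (D.D0 x) = 0) ∧
  (∀ x : g0, D.D1 (D.D0 x) = S.br0 w x) ∧
  (∀ f : g1, D.D0 (D.D1 f) = S.br1 w f) ∧
  D.D0 w = 0 ∧
  (∀ (c : K) (f : g1), al (c • f) = c * c * al f) ∧
  (∀ f g : g1, al (f + g) - al f - al g = No.Bo (D.D1 f) g)

/-- The structure constants of the `D_od`-extension `g = Kx ⊕ a ⊕ Ke` (odd form,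
even `x`, odd `e`); an even element is written `(r, u)` for `r x + u`, an odd
element `(v, μ)` for `v + μ e`. -/
def DodExtOddFormulas (S : SuperAlg K g0 g1) (No : OddNIS K g0 g1 S)
    (D : OddDer K g0 g1 S) (w : g0) (al : g1 → K) (m : K)
    (T : SuperAlg K (K × g0) (g1 × K)) (M : OddNIS K (K × g0) (g1 × K) T) : Prop :=
  (∀ (r r' : K) (x y : g0), T.br0 (r, x) (r', y) = (No.Bo y (D.D0 x), S.br0 x y)) ∧
  (∀ (r μ : K) (x : g0) (v : g1), T.br1 (r, x) (v, μ) = (S.br1 x v + μ • D.D0 x, 0)) ∧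
  (∀ (μ : K) (v : g1),
      T.sq (v, μ) = (μ * μ * m + al v, S.sq v + (μ * μ) • w + μ • D.D1 v)) ∧
  (∀ (r μ : K) (x : g0) (v : g1), M.Bo (r, x) (v, μ) = No.Bo x v + r * μ)

/-- The compatibility condition between an odd NIS `No` and an even derivation
`D`, entering the `D_ev`-extension (odd form case): `B(Du,v)+B(u,Dv)=0`. -/
def DevDataOdd (S : SuperAlg K g0 g1) (No : OddNIS K g0 g1 S)
    (D : EvenDer K g0 g1 S) : Prop :=
  ∀ (x : g0) (v : g1), No.Bo (D.D0 x) v + No.Bo x (D.D1 v) = 0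

/-- The structure constants of the `D_ev`-extension `g = Kx ⊕ a ⊕ Ke` (odd form,
odd `x`, even `e`); an even element is written `(u, ν)` for `u + ν e`, an odd
element `(μ, v)` for `μ x + v`. -/
def DevExtOddFormulas (S : SuperAlg K g0 g1) (No : OddNIS K g0 g1 S)
    (D : EvenDer K g0 g1 S)
    (T : SuperAlg K (g0 × K) (K × g1)) (M : OddNIS K (g0 × K) (K × g1) T) : Prop :=
  (∀ (ν ν' : K) (x y : g0),
      T.br0 (x, ν) (y, ν') = (S.br0 x y + ν • D.D0 y + ν' • D.D0 x, 0)) ∧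
  (∀ (ν μ : K) (x : g0) (v : g1),
      T.br1 (x, ν) (μ, v) = (No.Bo (D.D0 x) v, S.br1 x v + ν • D.D1 v)) ∧
  (∀ (μ : K) (v : g1), T.sq (μ, v) = (S.sq v, 0)) ∧
  (∀ (ν μ : K) (x : g0) (v : g1), M.Bo (x, ν) (μ, v) = No.Bo x v + ν * μ)

end Defs

end Char2DoubleExt

namespace Char2DoubleExt

theorem module_add_self_of_charTwo (K : Type) [Field K] [CharP K 2] {V : Type}
    [AddCommGroup V] [Module K V] (v : V) : v + v = 0 := by
  rw [← two_smul K v, CharTwo.two_eq_zero, zero_smul]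

namespace SuperAlg

variable {K g0 g1 h0 h1 : Type} [Field K]
  [AddCommGroup g0] [Module K g0] [AddCommGroup g1] [Module K g1]
  [AddCommGroup h0] [Module K h0] [AddCommGroup h1] [Module K h1]

theorem br11_self [CharP K 2] (S : SuperAlg K g0 g1) (f : g1) : S.br11 f f = 0 := by
  have h := S.sq_add f f
  have h0 := S.sq_smul 0 0
  rw [module_add_self_of_charTwo K f, module_add_self_of_charTwo K (S.sq f)] at h
  simp only [smul_zero, mul_zero, zero_smul] at h0
  simpa [h0] using h.symm

/-- A linear map preserving squarings preserves brackets of odd elements. -/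
theorem map_br11_of_map_sq (S : SuperAlg K g0 g1) (S' : SuperAlg K h0 h1)
    (e0 : g0 →ₗ[K] h0) (e1 : g1 →ₗ[K] h1) (h : ∀ f, e0 (S.sq f) = S'.sq (e1 f)) (f g : g1) :
    e0 (S.br11 f g) = S'.br11 (e1 f) (e1 g) := by
  have hfg := h (f + g)
  rw [S.sq_add, map_add, map_add, map_add, S'.sq_add, h, h] at hfg
  exact add_left_cancel hfg

end SuperAlg

/-- The odd component of the map between two `D_od`-extensions determined by `p`, `l`, `t`, `ν`. -/
def dodOddMap {K a1 : Type} [Field K] [AddCommGroup a1] [Module K a1]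
    (B : a1 →ₗ[K] a1 →ₗ[K] K) (p : a1 →ₗ[K] a1) (l : K) (t : a1) (ν : K) :
    (K × a1 × K) →ₗ[K] (K × a1 × K) where
  toFun f := (l * f.1 + B t f.2.1 + f.2.2 * ν, p f.2.1 + (l⁻¹ * f.2.2) • p t, l⁻¹ * f.2.2)
  map_add' f g := by
    ext
    · simp only [Prod.fst_add, Prod.snd_add, map_add]; ring
    · simp only [Prod.fst_add, Prod.snd_add, map_add]; module
    · simp only [Prod.snd_add]; ring
  map_smul' c f := by
    ext
    · simp only [Prod.smul_fst, Prod.smul_snd, map_smul, smul_eq_mul, RingHom.id_apply]; ring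
    · simp only [Prod.smul_fst, Prod.smul_snd, map_smul, smul_eq_mul, RingHom.id_apply]; module
    · simp only [Prod.smul_snd, smul_eq_mul, RingHom.id_apply]; ring

/-- Theorem 3.17 of the paper: let `(g, B_g)` and `(g̃, B_g̃)`
be `D_od`-extensions (even form, odd `x`, `x*`) of the same NIS-Lie superalgebra
`(a, B_a)` by the data `(D, a₀)` and `(D̃, ã₀)`. Given an isometry `π₀` of
`(a, B_a)`, a nonzero `λ ∈ K` and odd `t ∈ a_1` with
`π₀⁻¹ ∘ D̃ ∘ π₀ = λD + ad_t` on `a` and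
`ã₀ = λ²π₀(a₀) + s_a(π₀(t)) + λπ₀(D(t))`, the prescribed map `π` is an adapted
isometry `g → g̃`, for any `ν ∈ K`. -/
theorem stmt8 (K : Type) [Field K] [CharP K 2] (a0 a1 : Type)
    [AddCommGroup a0] [Module K a0] [AddCommGroup a1] [Module K a1]
    [FiniteDimensional K a0] [FiniteDimensional K a1]
    (S : SuperAlg K a0 a1) (N : EvenNIS K a0 a1 S)
    (D Dt : OddDer K a0 a1 S) (w wt : a0)
    (hdata : DodDataEven K a0 a1 S N D w)
    (hdatat : DodDataEven K a0 a1 S N Dt wt)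
    (T : SuperAlg K a0 (K × a1 × K)) (M : EvenNIS K a0 (K × a1 × K) T)
    (hT : DodExtEvenFormulas K a0 a1 S N D w T M)
    (Tt : SuperAlg K a0 (K × a1 × K)) (Mt : EvenNIS K a0 (K × a1 × K) Tt)
    (hTt : DodExtEvenFormulas K a0 a1 S N Dt wt Tt Mt)
    (p0 : EvenIsometry K a0 a1 a0 a1 S N S N)
    (lam : K) (hlam : lam ≠ 0) (t : a1)
    (hrel0 : ∀ x : a0, p0.e1.symm (Dt.D0 (p0.e0 x)) = lam • D.D0 x + S.br1 x t)
    (hrel1 : ∀ f : a1, p0.e0.symm (Dt.D1 (p0.e1 f)) = lam • D.D1 f + S.br11 t f)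
    (hwt : wt = (lam * lam) • p0.e0 w + S.sq (p0.e1 t) + lam • p0.e0 (D.D1 t))
    (ν : K) :
    ∃ π : EvenIsometry K a0 (K × a1 × K) a0 (K × a1 × K) T M Tt Mt,
      (∀ x : a0, π.e0 x = p0.e0 x) ∧
      (∀ (r s : K) (u : a1),
        π.e1 (r, u, s)
          = (lam * r + N.B1 t u + s * ν,
             p0.e1 u + (lam⁻¹ * s) • p0.e1 t, lam⁻¹ * s)) ∧
      -- adaptedness: `π(Kx ⊕ a) = Kx̃ ⊕ a`
      (∀ (r : K) (u : a1), ∃ (r' : K) (u' : a1), π.e1 (r, u, 0) = (r', u', 0)) := by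
  obtain ⟨hT0, hT1, hTsq, hM0, hM1⟩ := hT
  obtain ⟨hTt0, hTt1, hTtsq, hMt0, hMt1⟩ := hTt
  have hD0 (x : a0) : Dt.D0 (p0.e0 x) = lam • p0.e1 (D.D0 x) + p0.e1 (S.br1 x t) := by
    rw [← map_smul, ← map_add, ← hrel0, LinearEquiv.apply_symm_apply]
  have hD1 (f : a1) : Dt.D1 (p0.e1 f) = lam • p0.e0 (D.D1 f) + p0.e0 (S.br11 t f) := by
    rw [← map_smul, ← map_add, ← hrel1, LinearEquiv.apply_symm_apply]
  have hs (s : K) : ∃ m, s = lam * m := ⟨lam⁻¹ * s, by field_simp⟩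
  set q := dodOddMap N.B1 p0.e1.toLinearMap lam t ν with hq
  have hqs (r m : K) (u : a1) : q (r, u, lam * m)
      = (lam * r + N.B1 t u + lam * m * ν, p0.e1 u + m • p0.e1 t, m) := by
    simp [hq, dodOddMap, hlam]
  have hq0 (r : K) (u : a1) : q (r, u, 0) = (lam * r + N.B1 t u, p0.e1 u, 0) := by
    simpa using hqs r 0 u
  have hB (f g) : Mt.B1 (q f) (q g) = M.B1 f g := by
    obtain ⟨r, u, s⟩ := f
    obtain ⟨r', u', s'⟩ := g
    obtain ⟨m, rfl⟩ := hs s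
    obtain ⟨m', rfl⟩ := hs s'
    rw [hqs, hqs, hM1, hMt1]
    simp only [map_add, map_smul, LinearMap.add_apply, LinearMap.smul_apply, smul_eq_mul,
      p0.map_B1, N.alt1, N.symm1 u t]
    linear_combination (m' * N.B1 t u + m * N.B1 t u' + lam * m * m' * ν) *
      CharTwo.two_eq_zero (R := K)
  have hinj : Function.Injective q := by
    rw [injective_iff_map_eq_zero]
    intro f hf
    refine M.nondeg1 f fun g => ?_
    rw [← hB, hf, map_zero, LinearMap.zero_apply]
  have hsq (f) : p0.e0 (T.sq f) = Tt.sq (q f) := by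
    obtain ⟨r, u, s⟩ := f
    obtain ⟨m, rfl⟩ := hs s
    rw [hqs, hTsq, hTtsq, S.sq_add, S.sq_smul, hwt]
    simp only [map_add, map_smul, hD1, p0.map_sq, p0.map_br11, S.br11_self,
      S.br11_comm (p0.e1 u), LinearMap.smul_apply, map_zero]
    have h1 := module_add_self_of_charTwo K (S.sq (p0.e1 t))
    have h2 := module_add_self_of_charTwo K (S.br11 (p0.e1 t) (p0.e1 u))
    have h3 := module_add_self_of_charTwo K (p0.e0 (D.D1 t))
    linear_combination (norm := module) -((m * m) • h1) - m • h2 - (m * m * lam) • h3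
  have hbr (x f) : q (T.br1 x f) = Tt.br1 (p0.e0 x) (q f) := by
    obtain ⟨r, u, s⟩ := f
    obtain ⟨m, rfl⟩ := hs s
    have hxt (v : a1) : N.B1 (S.br1 x t) v = N.B1 t (S.br1 x v) := by
      rw [N.inv1, N.symm0, N.inv2]
    have htt : N.B1 t (S.br1 x t) = 0 := by rw [← N.inv2, S.br11_self]; simp
    rw [hqs, hT1, hTt1, hq0, hD0]
    ext
    · simp only [map_add, map_smul, LinearMap.add_apply, LinearMap.smul_apply, smul_eq_mul,
        p0.map_B1, hxt, htt, N.symm1 t (D.D0 x)]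
      ring
    · simp only [map_add, map_smul, p0.map_br1]
      have h := module_add_self_of_charTwo K (S.br1 (p0.e0 x) (p0.e1 t))
      linear_combination (norm := module) -(m • h)
    · rfl
  refine ⟨{ e0 := p0.e0
            e1 := LinearEquiv.ofInjectiveEndo q hinj
            map_br0 := fun x y => by rw [hT0, hTt0, p0.map_br0]
            map_br1 := hbr
            map_br11 := SuperAlg.map_br11_of_map_sq T Tt p0.e0.toLinearMap q hsq
            map_sq := hsq
            map_B0 := fun x y => by rw [hM0, hMt0, p0.map_B0]
            map_B1 := hB }, fun _ => rfl, fun _ _ _ => rfl, fun r u => ⟨_, _, hq0 r u⟩⟩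

end Char2DoubleExt
end

section
/- Let (a,B_a) be a NIS-Lie superalgebra over a field K of characteristic 2 with B_a even. Let D and D' be odd derivations with elements a_0, a_0' ∈ a_0, each pair satisfying B_a(D(u),v) = B_a(u,D(v)) for all u,v, D² = ad_{a_0}, D(a_0) = 0 (and similarly for D', a_0'). If D and D' are cohomologous, i.e. D = λD' + ad_t for some nonzero λ ∈ K and odd t ∈ a_1, with a_0 = λ²a_0' + s_a(t) + λD'(t), then the D_od-extensions of (a,B_a) by (D,a_0) and by (D',a_0') are isometric via an adapted isometry. -/
namespace Char2DoubleExt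

section Isometry

variable {K : Type} [Field K] {a0 a1 : Type}
variable [AddCommGroup a0] [Module K a0] [AddCommGroup a1] [Module K a1]

/-- In characteristic 2 the bracket of an odd element with itself vanishes. -/
lemma SuperAlg.br11_self_s9 [CharP K 2] (S : SuperAlg K a0 a1) (f : a1) : S.br11 f f = 0 := by
  have hsq0 : S.sq 0 = 0 := by simpa using S.sq_smul 0 0
  have hff : f + f = 0 := by rw [← two_smul K f, CharTwo.two_eq_zero, zero_smul]
  have hss : S.sq f + S.sq f = 0 := by
    rw [← two_smul K (S.sq f), CharTwo.two_eq_zero, zero_smul]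
  have h := S.sq_add f f
  rw [hff, hsq0, hss, zero_add] at h
  exact h.symm

/-- The bracket of odd elements is the polarization of the squaring. -/
lemma SuperAlg.br11_eq_polar (S : SuperAlg K a0 a1) (f g : a1) :
    S.br11 f g = S.sq (f + g) - S.sq f - S.sq g := by
  rw [S.sq_add]
  abel

/-- The linear automorphism `x ↦ c⁻¹ x`, `u ↦ u + c⁻¹ B(t,u) x`, `x* ↦ c x* + t` of
`Kx ⊕ a_1 ⊕ Kx*`. -/
def adaptedOddEquiv (B : a1 →ₗ[K] a1 →ₗ[K] K) (c : K) (hc : c ≠ 0) (t : a1) :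
    (K × a1 × K) ≃ₗ[K] (K × a1 × K) where
  toFun p := (c⁻¹ * (p.1 + B t p.2.1), p.2.1 + p.2.2 • t, c * p.2.2)
  map_add' p q := by
    ext
    · simp; ring
    · simp [add_smul]; abel
    · simp; ring
  map_smul' k p := by
    ext
    · simp; ring
    · simp [mul_smul]
    · simp; ring
  invFun p := (c * p.1 - B t (p.2.1 - (c⁻¹ * p.2.2) • t), p.2.1 - (c⁻¹ * p.2.2) • t, c⁻¹ * p.2.2)
  left_inv p := by
    ext <;> simp [hc]
  right_inv p := by
    ext <;> simp [hc]

lemma adaptedOddEquiv_apply (B : a1 →ₗ[K] a1 →ₗ[K] K) (c : K) (hc : c ≠ 0) (t : a1)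
    (r s : K) (u : a1) :
    adaptedOddEquiv B c hc t (r, u, s) = (c⁻¹ * (r + B t u), u + s • t, c * s) :=
  rfl

end Isometry

/-- Corollary 3.18 of the paper: two cohomologous odd
derivations `D = λD' + ad_t` (with `λ ≠ 0` and `t ∈ a_1` odd) of a NIS-Lie
superalgebra `(a, B_a)` in characteristic 2 with `B_a` even, with associated
elements `a₀ = λ²a₀' + s_a(t) + λD'(t)`, each pair satisfying the compatibility
conditions of a `D_od`-extension, define isometric `D_od`-extensions, via an
adapted isometry. -/
theorem stmt9 (K : Type) [Field K] [CharP K 2] (a0 a1 : Type)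
    [AddCommGroup a0] [Module K a0] [AddCommGroup a1] [Module K a1]
    [FiniteDimensional K a0] [FiniteDimensional K a1]
    (S : SuperAlg K a0 a1) (N : EvenNIS K a0 a1 S)
    (D D' : OddDer K a0 a1 S) (w w' : a0)
    (hdata : DodDataEven K a0 a1 S N D w)
    (hdata' : DodDataEven K a0 a1 S N D' w')
    (lam : K) (hlam : lam ≠ 0) (t : a1)
    (hcoh0 : ∀ x : a0, D.D0 x = lam • D'.D0 x + S.br1 x t)
    (hcoh1 : ∀ f : a1, D.D1 f = lam • D'.D1 f + S.br11 t f)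
    (hw : w = (lam * lam) • w' + S.sq t + lam • D'.D1 t)
    (T : SuperAlg K a0 (K × a1 × K)) (M : EvenNIS K a0 (K × a1 × K) T)
    (hT : DodExtEvenFormulas K a0 a1 S N D w T M)
    (T' : SuperAlg K a0 (K × a1 × K)) (M' : EvenNIS K a0 (K × a1 × K) T')
    (hT' : DodExtEvenFormulas K a0 a1 S N D' w' T' M') :
    ∃ π : EvenIsometry K a0 (K × a1 × K) a0 (K × a1 × K) T M T' M',
      ∀ (r : K) (u : a1), ∃ (r' : K) (u' : a1), π.e1 (r, u, 0) = (r', u', 0) := by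
  obtain ⟨hbr0, hbr1, hsq, hB0, hB1⟩ := hT
  obtain ⟨hbr0', hbr1', hsq', hB0', hB1'⟩ := hT'
  have htwo : (2 : K) = 0 := CharTwo.two_eq_zero
  have map_sq : ∀ f, T.sq f = T'.sq (adaptedOddEquiv N.B1 lam hlam t f) := by
    rintro ⟨r, u, s⟩
    rw [adaptedOddEquiv_apply, hsq, hsq', S.sq_add, S.sq_smul, hcoh1, hw, S.br11_comm t u]
    simp only [map_add, map_smul]
    module
  refine ⟨{ e0 := LinearEquiv.refl K a0
            e1 := adaptedOddEquiv N.B1 lam hlam t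
            map_br0 := fun x y => by simp [hbr0, hbr0']
            map_br1 := ?_
            map_br11 := fun f g => ?_
            map_sq := map_sq
            map_B0 := fun x y => by simp [hB0, hB0']
            map_B1 := ?_ }, fun r u => ⟨_, _, by rw [adaptedOddEquiv_apply, mul_zero]⟩⟩
  · rintro x ⟨r, u, s⟩
    have hmove : N.B1 t (S.br1 x u) = N.B1 (S.br1 x t) u := by
      rw [← N.inv2, N.inv1, N.symm0]
    have hself : N.B1 t (S.br1 x t) = 0 := by
      rw [← N.inv2, S.br11_self_s9, map_zero, LinearMap.zero_apply]
    rw [hbr1, adaptedOddEquiv_apply, adaptedOddEquiv_apply, LinearEquiv.refl_apply, hbr1']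
    refine Prod.ext ?_ (Prod.ext ?_ ?_)
    · simp only [hcoh0, map_add, map_smul, LinearMap.add_apply, LinearMap.smul_apply,
        smul_eq_mul, hmove, hself, N.symm1 t (D'.D0 x)]
      field_simp
      linear_combination N.B1 (S.br1 x t) u * htwo
    · simp only [hcoh0, map_add, map_smul]
      module
    · simp
  · rw [LinearEquiv.refl_apply, T.br11_eq_polar, T'.br11_eq_polar, ← map_add, map_sq, map_sq,
      map_sq]
  · rintro ⟨r, u, s⟩ ⟨r', u', s'⟩
    rw [adaptedOddEquiv_apply, adaptedOddEquiv_apply, hB1, hB1']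
    simp only [map_add, map_smul, LinearMap.add_apply, LinearMap.smul_apply, smul_eq_mul,
      N.alt1, N.symm1 u t]
    field_simp
    linear_combination (s' * N.B1 t u + s * N.B1 t u') * htwo

end Char2DoubleExt
end
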